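/- arXiv:2209.00418 — 2 statements merged into one kernel-verified Lean document; each statement's English description precedes it below -/
import Mathlib

section
/- Let δ be an increment function of size n and let [P,Q] be a left interval of height k ≥ 2 in the alt-Tamari poset Tam^δ_n, i.e. P = A d^k C B and Q = A C d^k B where C is the δ-excursion in P of its first up step. Then P ≤ Q in Tam^δ_n and the interval [P,Q] is linear of height k. -/
/-!
Common definitions.  A letter of a word is a `Bool`: `true` is an up step `u`,
`false` is a down step `d`.  Positions in words are 0-based.
-/

/-- A (possibly empty) Dyck word: as many `u`'s as `d`'s, and every
prefix has at least as many `u`'s as `d`'s. -/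
def IsDyckPath (w : List Bool) : Prop :=
  w.count true = w.count false ∧ ∀ p, p <+: w → p.count false ≤ p.count true

/-- A Dyck word of size `n`: `n` up steps, `n` down steps, every prefix has
at least as many `u`'s as `d`'s. -/
def IsDyckWord (n : ℕ) (w : List Bool) : Prop :=
  w.count true = n ∧ w.count false = n ∧ ∀ p, p <+: w → p.count false ≤ p.count true

/-- The set of Dyck words of size `n`. -/
def DyckSet (n : ℕ) : Set (List Bool) := {w | IsDyckWord n w}

/-- An increment function: a `{0,1}`-valued function (the paper's `δ : {1,…,n} → {0,1}`;
only the values on `{1,…,n}` are ever used). -/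
def IsIncFun (δ : ℕ → ℤ) : Prop := ∀ i, δ i = 0 ∨ δ i = 1

/-- The 0-based position in `w` of the `i`-th up step `u_i` (`i` is 1-based). -/
def upPos (w : List Bool) (i : ℕ) : ℕ :=
  ((List.range w.length).filter fun q => w.getD q false = true).getD (i - 1) 0

/-- `h_i(w)`: the (1-based, between 1 and 2n) position of the up step `u_i` in `w`. -/
def hpos (w : List Bool) (i : ℕ) : ℕ := upPos w i + 1

/-- The change of δ-altitude produced by the letter at position `q` of `w`:
the up step `u_i` contributes `δ i`, a down step contributes `-1`. -/
def stepVal (δ : ℕ → ℤ) (w : List Bool) (q : ℕ) : ℤ :=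
  if w.getD q false = true then δ ((w.take (q + 1)).count true) else -1

/-- The δ-elevation of the factor of `w` occupying positions `a, …, b-1`. -/
def elev (δ : ℕ → ℤ) (w : List Bool) (a b : ℕ) : ℤ :=
  ∑ q ∈ Finset.Ico a b, stepVal δ w q

/-- `C` is the δ-excursion of the up step of `w` at position `p`:
the smallest (nonempty) factor of `w` starting at `p` whose δ-elevation is `0`. -/
def IsDeltaExcAt (δ : ℕ → ℤ) (w : List Bool) (p : ℕ) (C : List Bool) : Prop :=
  w.getD p false = true ∧
  ∃ m, 0 < m ∧ p + m ≤ w.length ∧ C = (w.drop p).take m ∧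
    elev δ w p (p + m) = 0 ∧ ∀ m', 0 < m' → m' < m → elev δ w p (p + m') ≠ 0

/-- `C` is the excursion of the up step of `w` at position `p`: the smallest factor
of `w` starting at `p` that is itself a Dyck word. -/
def IsExcursionAt (w : List Bool) (p : ℕ) (C : List Bool) : Prop :=
  w.getD p false = true ∧
  ∃ m, 0 < m ∧ p + m ≤ w.length ∧ C = (w.drop p).take m ∧ IsDyckPath C ∧
    ∀ m', 0 < m' → m' < m → ¬ IsDyckPath ((w.drop p).take m')

/-- `ℓ_i(w; δ)`: the length of the δ-excursion of `u_i` in `w`. -/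
noncomputable def excLen (δ : ℕ → ℤ) (w : List Bool) (i : ℕ) : ℕ :=
  sInf {m | 0 < m ∧ elev δ w (upPos w i) (upPos w i + m) = 0}

/-- `Q` is the δ-rotation of `P` at some up step: `P = A d C B` with `d u_i` a valley
and `C` the δ-excursion of `u_i`, and `Q = A C d B`. -/
def DeltaRot (δ : ℕ → ℤ) (P Q : List Bool) : Prop :=
  ∃ A C B, P = A ++ false :: (C ++ B) ∧ Q = A ++ (C ++ false :: B) ∧
    IsDeltaExcAt δ P (A.length + 1) C

/-- The alt-Tamari order `Tam^δ`: reflexive transitive closure of δ-rotations. -/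
def altLE (δ : ℕ → ℤ) : List Bool → List Bool → Prop :=
  Relation.ReflTransGen (DeltaRot δ)

/-- The Tamari order: the alt-Tamari order for `δ ≡ 1` (the δ-excursion of any up step
is then its excursion). -/
def tamLE : List Bool → List Bool → Prop := altLE fun _ => 1

/-- The height (number of `u`'s minus number of `d`'s) of the length-`j` prefix of `w`. -/
def prefHeight (w : List Bool) (j : ℕ) : ℤ :=
  ((w.take j).count true : ℤ) - ((w.take j).count false : ℤ)

/-- The Dyck (inclusion) order: every prefix height of `P` is at most that of `Q`. -/
def dyckLE (P Q : List Bool) : Prop := ∀ j, prefHeight P j ≤ prefHeight Q j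

/-- Strict version of a relation `le`. -/
def ltOf (le : List Bool → List Bool → Prop) (P Q : List Bool) : Prop :=
  le P Q ∧ ¬ le Q P

/-- There is a strict chain `P = c 0 < c 1 < ⋯ < c k = Q` inside `S`. -/
def HasChainIn (S : Set (List Bool)) (le : List Bool → List Bool → Prop)
    (P Q : List Bool) (k : ℕ) : Prop :=
  ∃ c : ℕ → List Bool, c 0 = P ∧ c k = Q ∧ (∀ i ≤ k, c i ∈ S) ∧
    ∀ i < k, ltOf le (c i) (c (i + 1))

/-- The interval `[P,Q]` of the poset `(S, le)` has height `k`: `k` is the maximal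
length of a chain from `P` to `Q`. -/
def IntervalHeight (S : Set (List Bool)) (le : List Bool → List Bool → Prop)
    (P Q : List Bool) (k : ℕ) : Prop :=
  HasChainIn S le P Q k ∧ ∀ m, HasChainIn S le P Q m → m ≤ k

/-- The interval `[P,Q]` of the poset `(S, le)` is linear: it is totally ordered. -/
def LinearInterval (S : Set (List Bool)) (le : List Bool → List Bool → Prop)
    (P Q : List Bool) : Prop :=
  P ∈ S ∧ Q ∈ S ∧ le P Q ∧
  ∀ R R', R ∈ S → R' ∈ S → le P R → le R Q → le P R' → le R' Q → le R R' ∨ le R' R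

/-- `Q` covers `P` in the poset `(S, le)`. -/
def CovIn (S : Set (List Bool)) (le : List Bool → List Bool → Prop)
    (P Q : List Bool) : Prop :=
  P ∈ S ∧ Q ∈ S ∧ ltOf le P Q ∧ ∀ R ∈ S, ¬ (ltOf le P R ∧ ltOf le R Q)

/-- The number of valleys (factors `du`) of `w`. -/
def valleys (w : List Bool) : ℕ :=
  ((List.range w.length).filter fun q => !w.getD q true && w.getD (q + 1) false).length

/-- The number of down steps preceding the up step of 0-based index `j` in `w`
(all down steps of `w` if there is no such up step). -/
def downsBefore : List Bool → ℕ → ℤ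
  | [], _ => 0
  | false :: w, j => downsBefore w j + 1
  | true :: _, 0 => 0
  | true :: w, j + 1 => downsBefore w j

/-- The sum of the increments of the first `x` up steps. -/
def incSum (δ : ℕ → ℤ) (x : ℕ) : ℤ := ∑ l ∈ Finset.range x, δ (l + 1)

/-- The δ-elevation of the factor `C` when it is preceded by `a` up steps. -/
def wordElev (δ : ℕ → ℤ) (a : ℕ) (C : List Bool) : ℤ :=
  incSum δ (a + C.count true) - incSum δ a - C.count false

/-- `C` is a δ-excursion when it is preceded by `a` up steps. -/
def IsWordExc (δ : ℕ → ℤ) (a : ℕ) (C : List Bool) : Prop :=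
  C.getD 0 false = true ∧ wordElev δ a C = 0 ∧
    ∀ m, 0 < m → m < C.length → wordElev δ a (C.take m) ≠ 0

lemma incSum_succ (δ : ℕ → ℤ) (x : ℕ) : incSum δ (x + 1) = incSum δ x + δ (x + 1) :=
  Finset.sum_range_succ _ _

lemma downsBefore_nonneg (w : List Bool) (j : ℕ) : 0 ≤ downsBefore w j := by
  induction w generalizing j with
  | nil => simp [downsBefore]
  | cons b w ih =>
    cases b with
    | false => have := ih j; simp only [downsBefore]; omega
    | true => cases j <;> simp [downsBefore, ih]

lemma downsBefore_append_of_lt (x y : List Bool) (j : ℕ) (h : j < x.count true) :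
    downsBefore (x ++ y) j = downsBefore x j := by
  induction x generalizing j with
  | nil => simp at h
  | cons b x ih =>
    cases b with
    | false => simp [downsBefore, ih j (by simpa using h)]
    | true =>
      cases j with
      | zero => simp [downsBefore]
      | succ j => simp [downsBefore, ih j (by simpa using h)]

lemma downsBefore_append_add (x y : List Bool) (j : ℕ) :
    downsBefore (x ++ y) (x.count true + j) = x.count false + downsBefore y j := by
  induction x with
  | nil => simp
  | cons b x ih =>
    cases b with
    | false =>
      simp only [List.cons_append, downsBefore, List.count_cons]
      simp only [Bool.false_eq_true, beq_iff_eq, if_false, add_zero, ih]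
      simp; ring
    | true =>
      have : (true :: x).count true + j = (x.count true + j) + 1 := by simp; omega
      rw [this]
      simp [downsBefore, ih]

lemma downsBefore_append_of_le (x y : List Bool) (j : ℕ) (h : x.count true ≤ j) :
    downsBefore (x ++ y) j = x.count false + downsBefore y (j - x.count true) := by
  rw [← downsBefore_append_add, Nat.add_sub_cancel' h]

lemma downsBefore_injective (w w' : List Bool) (hlen : w.length = w'.length)
    (h : ∀ j, downsBefore w j = downsBefore w' j) : w = w' := by
  induction w generalizing w' with
  | nil => exact (List.length_eq_zero_iff.mp hlen.symm).symm
  | cons b w ih =>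
    cases w' with
    | nil => simp at hlen
    | cons b' w' =>
      have hlen' : w.length = w'.length := by simpa using hlen
      cases b <;> cases b'
      · rw [ih w' hlen' fun j => by simpa [downsBefore] using h j]
      · have := h 0
        have := downsBefore_nonneg w 0
        simp only [downsBefore] at *; omega
      · have := h 0
        have := downsBefore_nonneg w' 0
        simp only [downsBefore] at *; omega
      · rw [ih w' hlen' fun j => by simpa [downsBefore] using h (j + 1)]

lemma exists_take_before_up (C : List Bool) (i : ℕ) (h : i < C.count true) :
    ∃ m < C.length, (C.take m).count true = i ∧
      ((C.take m).count false : ℤ) = downsBefore C i := by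
  induction C generalizing i with
  | nil => simp at h
  | cons b C ih =>
    cases b with
    | false =>
      obtain ⟨m, hm, h1, h2⟩ := ih i (by simpa using h)
      exact ⟨m + 1, by simpa using hm, by simpa using h1, by simp [downsBefore, h2]⟩
    | true =>
      cases i with
      | zero => exact ⟨0, by simp, by simp, by simp [downsBefore]⟩
      | succ i =>
        obtain ⟨m, hm, h1, h2⟩ := ih i (by simpa using h)
        exact ⟨m + 1, by simpa using hm, by simpa using h1, by simp [downsBefore, h2]⟩

lemma wordElev_append (δ : ℕ → ℤ) (a : ℕ) (x y : List Bool) :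
    wordElev δ a (x ++ y) = wordElev δ a x + wordElev δ (a + x.count true) y := by
  simp only [wordElev, List.count_append, Nat.cast_add, Nat.add_assoc]
  ring

lemma stepVal_eq (δ : ℕ → ℤ) (w : List Bool) (q : ℕ) (hq : q < w.length) :
    stepVal δ w q = wordElev δ ((w.take q).count true) [w[q]] := by
  rw [stepVal, List.take_add_one]
  cases hb : w[q] <;> simp [hq, hb, wordElev, incSum_succ]

lemma elev_eq_wordElev (δ : ℕ → ℤ) (X Z : List Bool) (m : ℕ) (hm : m ≤ Z.length) :
    elev δ (X ++ Z) X.length (X.length + m) = wordElev δ (X.count true) (Z.take m) := by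
  induction m with
  | zero => simp [elev, wordElev]
  | succ m ih =>
    have hlt : X.length + m < (X ++ Z).length := by simp; omega
    have hstep : elev δ (X ++ Z) X.length (X.length + (m + 1)) =
        elev δ (X ++ Z) X.length (X.length + m) + stepVal δ (X ++ Z) (X.length + m) :=
      Finset.sum_Ico_succ_top (Nat.le_add_right _ _) _
    have hm' : m < Z.length := hm
    rw [hstep, ih (by omega), stepVal_eq δ _ _ hlt, ← List.take_append_getElem hm',
      wordElev_append]
    simp [List.take_append, List.take_of_length_le (Nat.le_add_right X.length m)]

lemma isDeltaExcAt_iff (δ : ℕ → ℤ) (X C Y : List Bool) :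
    IsDeltaExcAt δ (X ++ (C ++ Y)) X.length C ↔ IsWordExc δ (X.count true) C := by
  have helev : ∀ m ≤ C.length, elev δ (X ++ (C ++ Y)) X.length (X.length + m) =
      wordElev δ (X.count true) (C.take m) := by
    intro m hm
    rw [elev_eq_wordElev _ _ _ _ (by simp; omega), List.take_append_of_le_length hm]
  constructor
  · rintro ⟨h0, m, hm, hle, hC, hz, hmin⟩
    have hlen : C.length = m := by
      have := congrArg List.length hC
      simp at this hle
      omega
    subst hlen
    refine ⟨?_, ?_, ?_⟩
    · simpa [List.getElem?_append, hm] using h0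
    · rw [helev _ le_rfl] at hz
      simpa using hz
    · intro m' h1 h2
      rw [← helev _ h2.le]
      exact hmin m' h1 h2
  · rintro ⟨h0, hz, hmin⟩
    have hpos : 0 < C.length := by
      cases C with
      | nil => simp at h0
      | cons _ _ => simp
    refine ⟨?_, C.length, hpos, by simp, by simp, ?_, ?_⟩
    · simpa [List.getElem?_append, hpos] using h0
    · rw [helev _ le_rfl]
      simpa using hz
    · intro m' h1 h2
      rw [helev _ h2.le]
      exact hmin m' h1 h2

namespace IsWordExc

variable {δ : ℕ → ℤ} {a : ℕ} {C : List Bool}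

lemma count_pos (h : IsWordExc δ a C) : 0 < C.count true := by
  obtain ⟨h0, -⟩ := h
  cases C with
  | nil => simp at h0
  | cons b C =>
    have : b = true := by simpa using h0
    simp [this]

lemma downsBefore_zero (h : IsWordExc δ a C) : downsBefore C 0 = 0 := by
  obtain ⟨h0, -⟩ := h
  cases C with
  | nil => simp at h0
  | cons b C =>
    have : b = true := by simpa using h0
    simp [this, downsBefore]

lemma take_pos (hδ : IsIncFun δ) (h : IsWordExc δ a C) (m : ℕ) (hm : 0 < m)
    (hlt : m < C.length) : 0 < wordElev δ a (C.take m) := by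
  induction m, hm using Nat.le_induction with
  | base =>
    have hne := h.2.2 1 one_pos hlt
    obtain ⟨h0, -⟩ := h
    cases C with
    | nil => simp at h0
    | cons b C =>
      have hb : b = true := by simpa using h0
      subst hb
      simp only [wordElev, List.take_succ_cons, List.take_zero, List.count_singleton_self,
        incSum_succ] at hne ⊢
      rcases hδ (a + 1) with hd | hd <;> simp [hd] at hne ⊢
  | succ m hm ih =>
    have hlt' : m < C.length := by omega
    have hpos := ih hlt'
    have hne := h.2.2 (m + 1) (by omega) hlt
    have hstep : -1 ≤ wordElev δ (a + (C.take m).count true) [C[m]] := by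
      cases C[m] with
      | false => simp [wordElev]
      | true =>
        rcases hδ (a + (C.take m).count true + 1) with hd | hd <;>
          simp [wordElev, incSum_succ, hd]
    rw [← List.take_append_getElem hlt', wordElev_append] at hne ⊢
    omega

lemma downsBefore_lt (hδ : IsIncFun δ) (h : IsWordExc δ a C) (i : ℕ) (hi : 0 < i)
    (hlt : i < C.count true) : downsBefore C i < incSum δ (a + i) - incSum δ a := by
  obtain ⟨m, hm, h1, h2⟩ := exists_take_before_up C i hlt
  have hm0 : 0 < m := by
    rcases Nat.eq_zero_or_pos m with rfl | hm0
    · simp at h1; omega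
    · exact hm0
  have := h.take_pos hδ m hm0 hm
  rw [wordElev, h1, h2] at this
  omega

end IsWordExc

/-- The effect of a rotation on the numbers of down steps preceding each up step: the up steps
with index in `[a, a + c)`, which are those of an excursion, lose one preceding down step. -/
structure IsShift (δ : ℕ → ℤ) (f g : ℕ → ℤ) (a c : ℕ) : Prop where
  pos : 0 < c
  shift_mem : ∀ j, a ≤ j → j < a + c → g j = f j - 1
  shift_not_mem : ∀ j, ¬ (a ≤ j ∧ j < a + c) → g j = f j
  lt_of_mem : ∀ j, a < j → j < a + c → f j - f a < incSum δ j - incSum δ a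
  le_end : incSum δ (a + c) - incSum δ a ≤ f (a + c) - f a

lemma isShift_of_isWordExc {δ : ℕ → ℤ} (hδ : IsIncFun δ) (A C B : List Bool)
    (h : IsWordExc δ (A.count true) C) :
    IsShift δ (downsBefore (A ++ false :: (C ++ B))) (downsBefore (A ++ (C ++ false :: B)))
      (A.count true) (C.count true) := by
  have hin : ∀ j < C.count true, downsBefore (A ++ false :: (C ++ B)) (A.count true + j) =
      A.count false + (downsBefore C j + 1) := by
    intro j hj
    rw [downsBefore_append_add, downsBefore, downsBefore_append_of_lt _ _ _ hj]
  have ha := hin 0 h.count_pos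
  rw [h.downsBefore_zero, add_zero] at ha
  refine ⟨h.count_pos, ?_, ?_, ?_, ?_⟩
  · intro j h1 h2
    obtain ⟨i, rfl⟩ := Nat.exists_eq_add_of_le h1
    have hi : i < C.count true := by omega
    rw [hin i hi, downsBefore_append_add, downsBefore_append_of_lt _ _ _ hi]
    ring
  · intro j hj
    rcases lt_or_ge j (A.count true) with h1 | h1
    · rw [downsBefore_append_of_lt _ _ _ h1, downsBefore_append_of_lt _ _ _ h1]
    · obtain ⟨i, rfl⟩ := Nat.exists_eq_add_of_le h1
      have hi : C.count true ≤ i := by omega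
      rw [downsBefore_append_add, downsBefore_append_add, downsBefore,
        downsBefore_append_of_le _ _ _ hi, downsBefore_append_of_le _ _ _ hi, downsBefore]
      ring
  · intro j h1 h2
    obtain ⟨i, rfl⟩ := Nat.exists_eq_add_of_le h1.le
    have := h.downsBefore_lt hδ i (by omega) (by omega)
    rw [hin i (by omega), ha]
    linarith
  · have hz := h.2.1
    have := downsBefore_nonneg B (C.count true - C.count true)
    rw [ha, downsBefore_append_add, downsBefore, downsBefore_append_of_le _ _ _ le_rfl]
    rw [wordElev] at hz
    linarith

lemma DeltaRot.exists_isShift {δ : ℕ → ℤ} (hδ : IsIncFun δ) {P Q : List Bool}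
    (h : DeltaRot δ P Q) : ∃ a c, IsShift δ (downsBefore P) (downsBefore Q) a c := by
  obtain ⟨A, C, B, rfl, rfl, hC⟩ := h
  have hC' := isDeltaExcAt_iff δ (A ++ [false]) C B
  simp only [List.append_assoc, List.singleton_append, List.length_append, List.length_singleton,
    List.count_append] at hC'
  exact ⟨_, _, isShift_of_isWordExc hδ A C B (by simpa using hC'.mp hC)⟩

lemma DeltaRot.length_eq {δ : ℕ → ℤ} {P Q : List Bool} (h : DeltaRot δ P Q) :
    P.length = Q.length := by
  obtain ⟨A, C, B, rfl, rfl, -⟩ := h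
  simp; omega

lemma IsShift.le {δ f g : ℕ → ℤ} {a c : ℕ} (h : IsShift δ f g a c) (j : ℕ) : g j ≤ f j := by
  by_cases hj : a ≤ j ∧ j < a + c
  · rw [h.shift_mem j hj.1 hj.2]; omega
  · exact (h.shift_not_mem j hj).le

lemma altLE.downsBefore_le {δ : ℕ → ℤ} (hδ : IsIncFun δ) {P Q : List Bool} (h : altLE δ P Q)
    (j : ℕ) : downsBefore Q j ≤ downsBefore P j := by
  induction h with
  | refl => exact le_rfl
  | tail _ hr ih =>
    obtain ⟨a, c, hs⟩ := hr.exists_isShift hδ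
    exact (hs.le j).trans ih

/-- The up step of index `j` belongs to the excursion of the up step of index `i`, and at most
`d` down steps separate them. -/
def Nested (δ f : ℕ → ℤ) (i j : ℕ) (d : ℤ) : Prop :=
  f j - f i ≤ d ∧ ∀ x, i < x → x ≤ j → f x - f i < incSum δ x - incSum δ i

lemma IsShift.nested {δ f g : ℕ → ℤ} {a c i j : ℕ} {d : ℤ} (h : IsShift δ f g a c)
    (hij : i < j) (hf : Nested δ f i j d) : Nested δ g i j d := by
  have key : ∀ x, i < x → x ≤ j → g x - g i ≤ f x - f i := by
    intro x hix hxj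
    by_cases hi : a ≤ i ∧ i < a + c
    · by_cases hx : x < a + c
      · rw [h.shift_mem i hi.1 hi.2, h.shift_mem x (by omega) hx]; omega
      · exfalso
        have h1 := hf.2 (a + c) hi.2 (by omega)
        have h2 := h.le_end
        rcases hi.1.eq_or_lt with rfl | hlt
        · omega
        · have h3 := h.lt_of_mem i hlt hi.2
          omega
    · rw [h.shift_not_mem i hi]
      have := h.le x
      omega
  exact ⟨(key j hij le_rfl).trans hf.1, fun x h1 h2 => (key x h1 h2).trans_lt (hf.2 x h1 h2)⟩

lemma altLE.nested {δ : ℕ → ℤ} (hδ : IsIncFun δ) {P Q : List Bool} (h : altLE δ P Q)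
    {i j : ℕ} {d : ℤ} (hij : i < j) (hP : Nested δ (downsBefore P) i j d) :
    Nested δ (downsBefore Q) i j d := by
  induction h with
  | refl => exact hP
  | tail _ hr ih =>
    obtain ⟨a, c, hs⟩ := hr.exists_isShift hδ
    exact hs.nested hij ih

lemma List.prefix_append_cases {α : Type*} {p x y : List α} (h : p <+: x ++ y) :
    p <+: x ∨ ∃ q, p = x ++ q ∧ q <+: y := by
  rcases List.prefix_or_prefix_of_prefix h (List.prefix_append x y) with hp | ⟨q, rfl⟩
  · exact Or.inl hp
  · exact Or.inr ⟨q, rfl, (List.prefix_append_right_inj x).mp h⟩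

lemma IsDyckWord.swap {n : ℕ} {A C B : List Bool} (h : IsDyckWord n (A ++ false :: (C ++ B))) :
    IsDyckWord n (A ++ (C ++ false :: B)) := by
  obtain ⟨h1, h2, h3⟩ := h
  refine ⟨?_, ?_, ?_⟩
  · rw [← h1]; simp
  · rw [← h2]; simp; omega
  · intro p hp
    rcases List.prefix_append_cases hp with hp | ⟨q, rfl, hq⟩
    · exact h3 p (hp.trans (List.prefix_append _ _))
    rcases List.prefix_append_cases hq with hq | ⟨r, rfl, hr⟩
    · have := h3 (A ++ false :: q) (by
        rw [List.prefix_append_right_inj, List.cons_prefix_cons]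
        exact ⟨rfl, hq.trans (List.prefix_append _ _)⟩)
      simp at this ⊢; omega
    cases r with
    | nil =>
      have := h3 (A ++ false :: C) (by
        rw [List.prefix_append_right_inj, List.cons_prefix_cons]
        exact ⟨rfl, List.prefix_append _ _⟩)
      simp at this ⊢; omega
    | cons b r =>
      rw [List.cons_prefix_cons] at hr
      obtain ⟨rfl, hr⟩ := hr
      have := h3 (A ++ false :: (C ++ r)) (by
        rw [List.prefix_append_right_inj, List.cons_prefix_cons]
        exact ⟨rfl, by rwa [List.prefix_append_right_inj]⟩)
      simp at this ⊢; omega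

/-- The word obtained from `A d^k C B` by moving `t` down steps from before `C` to after `C`. -/
def slide (A C B : List Bool) (k t : ℕ) : List Bool :=
  A ++ (List.replicate (k - t) false ++ (C ++ (List.replicate t false ++ B)))

lemma slide_of_lt (A C B : List Bool) {k t : ℕ} (ht : t < k) :
    slide A C B k t = (A ++ List.replicate (k - (t + 1)) false) ++
      false :: (C ++ (List.replicate t false ++ B)) := by
  have : k - t = (k - (t + 1)) + 1 := by omega
  rw [slide, this, List.replicate_succ']
  simp

lemma slide_succ (A C B : List Bool) (k t : ℕ) :
    slide A C B k (t + 1) = (A ++ List.replicate (k - (t + 1)) false) ++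
      (C ++ false :: (List.replicate t false ++ B)) := by
  simp [slide, List.replicate_succ]

section Slide

variable {δ : ℕ → ℤ} {A C B : List Bool} {k t : ℕ}

lemma IsWordExc.isShift_slide (hδ : IsIncFun δ) (hC : IsWordExc δ (A.count true) C)
    (ht : t < k) : IsShift δ (downsBefore (slide A C B k t))
      (downsBefore (slide A C B k (t + 1))) (A.count true) (C.count true) := by
  have hcount : (A ++ List.replicate (k - (t + 1)) false).count true = A.count true := by
    simp [List.count_replicate]
  have := isShift_of_isWordExc hδ (A ++ List.replicate (k - (t + 1)) false) C
    (List.replicate t false ++ B) (by rwa [hcount])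
  rwa [hcount, ← slide_of_lt A C B ht, ← slide_succ] at this

lemma IsWordExc.deltaRot_slide (hC : IsWordExc δ (A.count true) C) (ht : t < k) :
    DeltaRot δ (slide A C B k t) (slide A C B k (t + 1)) := by
  refine ⟨A ++ List.replicate (k - (t + 1)) false, C, List.replicate t false ++ B,
    slide_of_lt A C B ht, slide_succ A C B k t, ?_⟩
  have h := isDeltaExcAt_iff δ (A ++ List.replicate (k - t) false) C (List.replicate t false ++ B)
  have hlen : (A ++ List.replicate (k - t) false).length =
      (A ++ List.replicate (k - (t + 1)) false).length + 1 := by simp; omega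
  rw [hlen, List.append_assoc] at h
  refine h.mpr ?_
  simpa [List.count_replicate] using hC

lemma IsWordExc.altLE_slide (hC : IsWordExc δ (A.count true) C) {s : ℕ} (hst : s ≤ t)
    (ht : t ≤ k) : altLE δ (slide A C B k s) (slide A C B k t) := by
  induction t, hst using Nat.le_induction with
  | base => exact Relation.ReflTransGen.refl
  | succ t _ ih => exact (ih (by omega)).tail (hC.deltaRot_slide (by omega))

lemma isDyckWord_slide {n : ℕ} (h : IsDyckWord n (slide A C B k 0)) (ht : t ≤ k) :
    IsDyckWord n (slide A C B k t) := by
  induction t with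
  | zero => exact h
  | succ t ih =>
    have := ih (by omega)
    rw [slide_of_lt A C B (by omega)] at this
    rw [slide_succ]
    exact this.swap

lemma length_slide (ht : t ≤ k) : (slide A C B k t).length = (slide A C B k 0).length := by
  simp [slide]; omega

lemma IsWordExc.downsBefore_slide_mem (hδ : IsIncFun δ) (hC : IsWordExc δ (A.count true) C)
    (ht : t ≤ k) {j : ℕ} (h1 : A.count true ≤ j) (h2 : j < A.count true + C.count true) :
    downsBefore (slide A C B k t) j = downsBefore (slide A C B k 0) j - t := by
  induction t with
  | zero => simp
  | succ t ih =>
    rw [(hC.isShift_slide hδ ht).shift_mem j h1 h2, ih (by omega)]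
    push_cast; ring

lemma IsWordExc.downsBefore_slide_not_mem (hδ : IsIncFun δ)
    (hC : IsWordExc δ (A.count true) C) (ht : t ≤ k) {j : ℕ}
    (h : ¬ (A.count true ≤ j ∧ j < A.count true + C.count true)) :
    downsBefore (slide A C B k t) j = downsBefore (slide A C B k 0) j := by
  induction t with
  | zero => rfl
  | succ t ih => rw [(hC.isShift_slide hδ ht).shift_not_mem j h, ih (by omega)]

lemma IsWordExc.le_of_altLE_slide (hδ : IsIncFun δ) (hC : IsWordExc δ (A.count true) C)
    {s : ℕ} (hs : s ≤ k) (ht : t ≤ k) (h : altLE δ (slide A C B k s) (slide A C B k t)) :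
    s ≤ t := by
  have h0 := h.downsBefore_le hδ (A.count true)
  have hc := hC.count_pos
  rw [hC.downsBefore_slide_mem hδ hs le_rfl (by omega),
    hC.downsBefore_slide_mem hδ ht le_rfl (by omega)] at h0
  omega

lemma IsWordExc.eq_slide_succ (hδ : IsIncFun δ) (hC : IsWordExc δ (A.count true) C)
    (ht : t ≤ k) {R : List Bool} (hR : DeltaRot δ (slide A C B k t) R)
    (hRQ : altLE δ R (slide A C B k k)) : t < k ∧ R = slide A C B k (t + 1) := by
  obtain ⟨a, c, hs⟩ := hR.exists_isShift hδ
  have hcpos := hC.count_pos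
  have hapos := hs.pos
  have hmono := hRQ.downsBefore_le hδ
  have hsub : ∀ j, a ≤ j → j < a + c →
      A.count true ≤ j ∧ j < A.count true + C.count true := by
    intro j h1 h2
    by_contra hj
    have := hmono j
    rw [hs.shift_mem j h1 h2, hC.downsBefore_slide_not_mem hδ ht hj,
      hC.downsBefore_slide_not_mem hδ le_rfl hj] at this
    omega
  have hamem := hsub a le_rfl (by omega)
  have hcmem := hsub (a + c - 1) (by omega) (by omega)
  have htk : t < k := by
    have := hmono a
    rw [hs.shift_mem a le_rfl (by omega), hC.downsBefore_slide_mem hδ ht hamem.1 hamem.2,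
      hC.downsBefore_slide_mem hδ le_rfl hamem.1 hamem.2] at this
    omega
  have hslide := hC.isShift_slide (B := B) hδ htk
  refine ⟨htk, ?_⟩
  have ha : a = A.count true := by
    by_contra hne
    have hlt : A.count true < a := by omega
    have hi : downsBefore R (A.count true) = downsBefore (slide A C B k t) (A.count true) :=
      hs.shift_not_mem _ (by omega)
    have hnest := hRQ.nested hδ hlt (d := downsBefore R a - downsBefore R (A.count true))
      ⟨le_rfl, fun x h1 h2 => by
        have := hslide.lt_of_mem x h1 (by omega)
        have := hs.le x
        omega⟩
    have h1 := hnest.1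
    rw [hi, hs.shift_mem a le_rfl (by omega),
      hC.downsBefore_slide_mem hδ ht hamem.1 hamem.2,
      hC.downsBefore_slide_mem hδ ht le_rfl (by omega),
      hC.downsBefore_slide_mem hδ le_rfl hamem.1 hamem.2,
      hC.downsBefore_slide_mem hδ le_rfl le_rfl (by omega)] at h1
    omega
  subst ha
  have hc : c = C.count true := by
    by_contra hne
    have h1 := hs.le_end
    have h2 := hslide.lt_of_mem (A.count true + c) (by omega) (by omega)
    omega
  subst hc
  refine downsBefore_injective _ _ ?_ fun j => ?_
  · rw [← hR.length_eq, length_slide ht, length_slide (t := t + 1) htk]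
  · by_cases hj : A.count true ≤ j ∧ j < A.count true + C.count true
    · rw [hs.shift_mem j hj.1 hj.2, hslide.shift_mem j hj.1 hj.2]
    · rw [hs.shift_not_mem j hj, hslide.shift_not_mem j hj]

lemma IsWordExc.exists_eq_slide (hδ : IsIncFun δ) (hC : IsWordExc δ (A.count true) C)
    {R : List Bool} (hPR : altLE δ (slide A C B k 0) R) (hRQ : altLE δ R (slide A C B k k)) :
    ∃ t ≤ k, R = slide A C B k t := by
  induction hPR with
  | refl => exact ⟨0, Nat.zero_le _, rfl⟩
  | tail _ hr ih =>
    obtain ⟨t, ht, rfl⟩ := ih (Relation.ReflTransGen.head hr hRQ)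
    obtain ⟨htk, rfl⟩ := hC.eq_slide_succ hδ ht hr hRQ
    exact ⟨t + 1, htk, rfl⟩

end Slide

lemma altLE_of_chain {δ : ℕ → ℤ} {c : ℕ → List Bool} {m : ℕ}
    (h : ∀ i < m, ltOf (altLE δ) (c i) (c (i + 1))) {i j : ℕ} (hij : i ≤ j) (hj : j ≤ m) :
    altLE δ (c i) (c j) := by
  induction j, hij using Nat.le_induction with
  | base => exact Relation.ReflTransGen.refl
  | succ j _ ih => exact (ih (by omega)).trans (h j (by omega)).1

/-- a left interval of height `k ≥ 2` in `Tam^δ_n` is linear of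
height `k`. -/
theorem stmt14 (n k : ℕ) (hk : 2 ≤ k) (δ : ℕ → ℤ) (hδ : IsIncFun δ)
    (P Q A C B : List Bool) (hP : IsDyckWord n P) (hQ : IsDyckWord n Q)
    (hPd : P = A ++ (List.replicate k false ++ (C ++ B)))
    (hQd : Q = A ++ (C ++ (List.replicate k false ++ B)))
    (hC : IsDeltaExcAt δ P (A.length + k) C) :
    altLE δ P Q ∧ LinearInterval (DyckSet n) (altLE δ) P Q ∧
      IntervalHeight (DyckSet n) (altLE δ) P Q k := by
  have hP0 : P = slide A C B k 0 := by simp [hPd, slide]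
  have hQk : Q = slide A C B k k := by simp [hQd, slide]
  have hexc : IsWordExc δ (A.count true) C := by
    have h := isDeltaExcAt_iff δ (A ++ List.replicate k false) C B
    rw [List.append_assoc, ← hPd] at h
    simpa [List.count_replicate] using h.mp (by simpa using hC)
  have hPQ : altLE δ P Q := by
    rw [hP0, hQk]
    exact hexc.altLE_slide (Nat.zero_le _) le_rfl
  clear hPd hQd hC
  subst hP0 hQk
  refine ⟨hPQ, ⟨hP, hQ, hPQ, ?_⟩, ⟨slide A C B k, rfl, rfl, ?_, ?_⟩, ?_⟩
  · intro R R' _ _ h1 h2 h3 h4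
    obtain ⟨s, hs, rfl⟩ := hexc.exists_eq_slide hδ h1 h2
    obtain ⟨t, ht, rfl⟩ := hexc.exists_eq_slide hδ h3 h4
    rcases le_total s t with h | h
    · exact Or.inl (hexc.altLE_slide h ht)
    · exact Or.inr (hexc.altLE_slide h hs)
  · exact fun i hi => isDyckWord_slide hP hi
  · intro i hi
    refine ⟨hexc.altLE_slide (Nat.le_succ i) hi, fun h => ?_⟩
    have := hexc.le_of_altLE_slide hδ hi hi.le h
    omega
  · rintro m ⟨c, h0, hm, -, hlt⟩
    have hmem : ∀ i ≤ m, ∃ t ≤ k, c i = slide A C B k t := fun i hi =>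
      hexc.exists_eq_slide hδ (h0 ▸ altLE_of_chain hlt (Nat.zero_le i) hi)
        (hm ▸ altLE_of_chain hlt hi le_rfl)
    have hbound : ∀ i ≤ m, ∃ t ≤ k, i ≤ t ∧ c i = slide A C B k t := by
      intro i
      induction i with
      | zero => exact fun _ => ⟨0, Nat.zero_le _, le_rfl, h0⟩
      | succ i ih =>
        intro hi
        obtain ⟨s, hs, his, hcs⟩ := ih (by omega)
        obtain ⟨t, ht, hct⟩ := hmem (i + 1) hi
        have hstep := hlt i hi
        rw [hcs, hct] at hstep
        have hst : s < t := by
          by_contra hle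
          exact hstep.2 (hexc.altLE_slide (by omega) hs)
        exact ⟨t, ht, by omega, hct⟩
    obtain ⟨t, ht, hmt, -⟩ := hbound m le_rfl
    omega
end

section
/- Let n ≥ 1, k ≥ 2, and let δ be an increment function of size n. The left intervals of height k in the alt-Tamari poset Tam^δ_n are in bijection with sequences (P_0, P_1, …, P_k) of Dyck words, where P_0 is marked at one of its up steps and the sizes of P_0, …, P_k add up to n − k; in particular, the number of left intervals of height k in Tam^δ_n is binomial(2n−k, n+1), independently of δ. -/
/-- The height reached by reading the word `w` from height `h`, or `none` if the path goes
below `0`. -/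
def walkHeight : ℕ → List Bool → Option ℕ
  | h, [] => some h
  | h, true :: w => walkHeight (h + 1) w
  | 0, false :: _ => none
  | h + 1, false :: w => walkHeight h w

theorem walkHeight_eq_some_iff {w : List Bool} {h m : ℕ} :
    walkHeight h w = some m ↔
      w.count false + m = h + w.count true ∧
        ∀ p, p <+: w → p.count false ≤ h + p.count true := by
  induction w generalizing h with
  | nil => simp [walkHeight, eq_comm]
  | cons x w ih =>
    cases x with
    | true =>
      simp only [walkHeight, ih, List.prefix_cons_iff]
      constructor
      · rintro ⟨h₁, h₂⟩
        refine ⟨by simp; omega, ?_⟩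
        rintro p (rfl | ⟨t, rfl, ht⟩)
        · simp
        · have := h₂ t ht
          simp; omega
      · rintro ⟨h₁, h₂⟩
        refine ⟨by simp at h₁; omega, fun p hp ↦ ?_⟩
        have := h₂ (true :: p) (Or.inr ⟨p, rfl, hp⟩)
        simp at this; omega
    | false =>
      cases h with
      | zero =>
        simp only [walkHeight, reduceCtorEq, false_iff, not_and]
        intro _ h₂
        simpa using h₂ [false] (by simp)
      | succ h =>
        simp only [walkHeight, ih, List.prefix_cons_iff]
        constructor
        · rintro ⟨h₁, h₂⟩
          refine ⟨by simp; omega, ?_⟩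
          rintro p (rfl | ⟨t, rfl, ht⟩)
          · simp
          · have := h₂ t ht
            simp; omega
        · rintro ⟨h₁, h₂⟩
          refine ⟨by simp at h₁; omega, fun p hp ↦ ?_⟩
          have := h₂ (false :: p) (Or.inr ⟨p, rfl, hp⟩)
          simp at this; omega

theorem isDyckPath_iff_walkHeight {w : List Bool} :
    IsDyckPath w ↔ walkHeight 0 w = some 0 := by
  simp [IsDyckPath, walkHeight_eq_some_iff, eq_comm]

theorem isDyckWord_iff {n : ℕ} {w : List Bool} :
    IsDyckWord n w ↔ IsDyckPath w ∧ w.count true = n := by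
  unfold IsDyckWord IsDyckPath
  constructor
  · rintro ⟨h₁, h₂, h₃⟩
    exact ⟨⟨h₁.trans h₂.symm, h₃⟩, h₁⟩
  · rintro ⟨⟨h₁, h₃⟩, h₂⟩
    exact ⟨h₂, h₁ ▸ h₂, h₃⟩

theorem walkHeight_append (h : ℕ) (v w : List Bool) :
    walkHeight h (v ++ w) = (walkHeight h v).bind fun m ↦ walkHeight m w := by
  induction v generalizing h with
  | nil => rfl
  | cons x v ih => cases x <;> cases h <;> simp [walkHeight, ih]

theorem walkHeight_add {w : List Bool} {h m : ℕ} (c : ℕ) (hw : walkHeight h w = some m) :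
    walkHeight (h + c) w = some (m + c) := by
  rw [walkHeight_eq_some_iff] at hw ⊢
  exact ⟨by omega, fun p hp ↦ by have := hw.2 p hp; omega⟩

theorem IsDyckPath.walkHeight {w : List Bool} (hw : IsDyckPath w) (h : ℕ) :
    walkHeight h w = some h := by
  simpa using walkHeight_add h (isDyckPath_iff_walkHeight.1 hw)

theorem walkHeight_replicate_false (h k : ℕ) :
    walkHeight (h + k) (List.replicate k false) = some h := by
  rw [walkHeight_eq_some_iff]
  refine ⟨by simp [List.count_replicate]; omega, fun p hp ↦ ?_⟩
  have := hp.sublist.count_le false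
  simp at this; omega

/-- Any word ending strictly above its starting height splits at the last step by which it
reaches its final height. -/
theorem exists_eq_append_true_cons_isDyckPath (A : List Bool)
    (hA : A.count false < A.count true) :
    ∃ A' D, A = A' ++ true :: D ∧ IsDyckPath D := by
  induction hl : A.length using Nat.strong_induction_on generalizing A with
  | _ l ih =>
    subst hl
    rcases List.eq_nil_or_concat A with rfl | ⟨A₀, x, rfl⟩
    · simp at hA
    cases x with
    | true => exact ⟨A₀, [], by simp, by simp [isDyckPath_iff_walkHeight, walkHeight]⟩
    | false =>
      simp at hA
      obtain ⟨A₁, D₁, rfl, hD₁⟩ := ih A₀.length (by simp) A₀ (by omega) rfl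
      have := hD₁.1
      simp at hA
      obtain ⟨A₂, D₂, rfl, hD₂⟩ := ih A₁.length (by simp) A₁ (by omega) rfl
      refine ⟨A₂, D₂ ++ true :: D₁ ++ [false], by simp, ?_⟩
      simp [isDyckPath_iff_walkHeight, walkHeight_append, hD₁.walkHeight, hD₂.walkHeight,
        walkHeight]

theorem append_true_cons_isDyckPath_injective {A A' D D' : List Bool} (hD : IsDyckPath D)
    (hD' : IsDyckPath D') (h : A ++ true :: D = A' ++ true :: D') : A = A' ∧ D = D' := by
  have key : ∀ {E D D' : List Bool}, IsDyckPath D → IsDyckPath D' → D ≠ E ++ true :: D' := by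
    rintro E D D' hD hD' rfl
    have h₁ := hD.1
    have h₂ := hD.2 E (by simp)
    have h₃ := hD'.1
    simp at h₁; omega
  rw [List.append_eq_append_iff] at h
  rcases h with ⟨E, rfl, hE⟩ | ⟨E, rfl, hE⟩ <;> cases E with
  | nil => simpa [eq_comm] using hE
  | cons x E =>
    simp only [List.cons_append, List.cons.injEq] at hE
    first | exact (key hD hD' hE.2).elim | exact (key hD' hD hE.2).elim

/-- The word `u D_{k-1} ⋯ u D_1 u D_0`. -/
def upChain : (k : ℕ) → (Fin k → List Bool) → List Bool
  | 0, _ => []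
  | k + 1, D => upChain k (Fin.tail D) ++ true :: D 0

theorem count_true_upChain (k : ℕ) (D : Fin k → List Bool) :
    (upChain k D).count true = k + ∑ j, (D j).count true := by
  induction k with
  | zero => simp [upChain]
  | succ k ih =>
    simp [upChain, ih, Fin.sum_univ_succ, Fin.tail]
    omega

theorem walkHeight_upChain {k : ℕ} {D : Fin k → List Bool} (hD : ∀ j, IsDyckPath (D j))
    (h : ℕ) : walkHeight h (upChain k D) = some (h + k) := by
  induction k with
  | zero => simp [upChain, walkHeight]
  | succ k ih =>
    simp [upChain, walkHeight_append, ih (D := Fin.tail D) fun j ↦ hD j.succ, walkHeight,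
      (hD 0).walkHeight, add_assoc]

theorem exists_eq_append_upChain (k : ℕ) (A : List Bool)
    (hA : A.count false + k ≤ A.count true) :
    ∃ A₀ D, A = A₀ ++ upChain k D ∧ ∀ j, IsDyckPath (D j) := by
  induction k generalizing A with
  | zero => exact ⟨A, Fin.elim0, by simp [upChain], fun j ↦ j.elim0⟩
  | succ k ih =>
    obtain ⟨A', D, rfl, hD⟩ := exists_eq_append_true_cons_isDyckPath A (by omega)
    have := hD.1
    simp at hA
    obtain ⟨A₀, D', rfl, hD'⟩ := ih A' (by omega)
    exact ⟨A₀, Fin.cons D D', by simp [upChain], Fin.cases hD hD'⟩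

theorem append_upChain_injective {k : ℕ} {A A' : List Bool} {D D' : Fin k → List Bool}
    (hD : ∀ j, IsDyckPath (D j)) (hD' : ∀ j, IsDyckPath (D' j))
    (h : A ++ upChain k D = A' ++ upChain k D') : A = A' ∧ D = D' := by
  induction k with
  | zero => exact ⟨by simpa [upChain] using h, Subsingleton.elim _ _⟩
  | succ k ih =>
    simp only [upChain, ← List.append_assoc] at h
    obtain ⟨h₁, h₂⟩ := append_true_cons_isDyckPath_injective (hD 0) (hD' 0) h
    obtain ⟨h₃, h₄⟩ := ih (fun j ↦ hD j.succ) (fun j ↦ hD' j.succ) h₁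
    exact ⟨h₃, funext (Fin.cases h₂ fun j ↦ congrFun h₄ j)⟩

theorem isDyckPath_append_upChain_iff {k : ℕ} {D : Fin k → List Bool}
    (hD : ∀ j, IsDyckPath (D j)) (A₀ B : List Bool) :
    IsDyckPath ((A₀ ++ upChain k D) ++ (List.replicate k false ++ B)) ↔
      IsDyckPath (A₀ ++ B) := by
  simp only [isDyckPath_iff_walkHeight, walkHeight_append, Option.bind_assoc]
  cases walkHeight 0 A₀ <;> simp [walkHeight_upChain hD, walkHeight_replicate_false]

/-- The letters of `DyckWord` as Booleans. -/
def dyckStepEquivBool : DyckStep ≃ Bool where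
  toFun s := decide (s = DyckStep.U)
  invFun b := if b then DyckStep.U else DyckStep.D
  left_inv s := by cases s <;> rfl
  right_inv b := by cases b <;> rfl

theorem count_true_map_dyckStepEquivBool (l : List DyckStep) :
    (l.map dyckStepEquivBool).count true = l.count DyckStep.U :=
  List.count_map_of_injective l _ dyckStepEquivBool.injective DyckStep.U

theorem count_false_map_dyckStepEquivBool (l : List DyckStep) :
    (l.map dyckStepEquivBool).count false = l.count DyckStep.D :=
  List.count_map_of_injective l _ dyckStepEquivBool.injective DyckStep.D

theorem isDyckPath_map_dyckStepEquivBool (l : List DyckStep) :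
    IsDyckPath (l.map dyckStepEquivBool) ↔
      l.count DyckStep.U = l.count DyckStep.D ∧
        ∀ i, (l.take i).count DyckStep.D ≤ (l.take i).count DyckStep.U := by
  simp only [IsDyckPath, count_true_map_dyckStepEquivBool, count_false_map_dyckStepEquivBool]
  refine and_congr_right fun _ ↦ ⟨fun h i ↦ ?_, fun h p hp ↦ ?_⟩
  · have := h ((l.take i).map dyckStepEquivBool) ((List.take_prefix i l).map _)
    simpa only [count_true_map_dyckStepEquivBool, count_false_map_dyckStepEquivBool] using this
  · rw [List.prefix_iff_eq_take.1 hp, ← List.map_take]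
    simpa only [count_true_map_dyckStepEquivBool, count_false_map_dyckStepEquivBool] using h _

/-- Dyck words in the sense of `DyckWord`, as words in the letters `true` and `false`. -/
noncomputable def dyckWordEquivIsDyckPath (n : ℕ) :
    {p : DyckWord // p.semilength = n} ≃
      {w : List Bool // IsDyckPath w ∧ w.count true = n} :=
  Equiv.ofBijective
    (fun p ↦ ⟨p.1.toList.map dyckStepEquivBool,
      (isDyckPath_map_dyckStepEquivBool _).2 ⟨p.1.count_U_eq_count_D, p.1.count_D_le_count_U⟩,
      (count_true_map_dyckStepEquivBool _).trans p.2⟩) (by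
    constructor
    · intro p q h
      exact Subtype.ext (DyckWord.ext
        (dyckStepEquivBool.injective.list_map (congrArg Subtype.val h)))
    · rintro ⟨w, hw, hn⟩
      obtain ⟨l, rfl⟩ := dyckStepEquivBool.surjective.list_map w
      obtain ⟨h₁, h₂⟩ := (isDyckPath_map_dyckStepEquivBool l).1 hw
      exact ⟨⟨⟨l, h₁, h₂⟩, (count_true_map_dyckStepEquivBool l).symm.trans hn⟩, rfl⟩)

theorem finite_isDyckPath_count (n : ℕ) :
    Finite {w : List Bool // IsDyckPath w ∧ w.count true = n} :=
  Finite.of_equiv _ (dyckWordEquivIsDyckPath n)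

theorem card_isDyckPath_count (n : ℕ) :
    Nat.card {w : List Bool // IsDyckPath w ∧ w.count true = n} = catalan n := by
  rw [← Nat.card_congr (dyckWordEquivIsDyckPath n), Nat.card_eq_fintype_card,
    DyckWord.card_dyckWord_semilength_eq_catalan]

theorem lt_length_of_getD_eq_true {w : List Bool} {p : ℕ} (hp : w.getD p false = true) :
    p < w.length := by
  by_contra hlt
  rw [List.getD_eq_default _ _ (not_lt.1 hlt)] at hp
  exact Bool.false_ne_true hp

theorem card_getD_eq_true (w : List Bool) :
    Nat.card {p : ℕ // w.getD p false = true} = w.count true := by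
  have h : ∀ p, p ∈ (Finset.range w.length).filter (fun p ↦ w.getD p false = true) ↔
      w.getD p false = true := by
    intro p
    rw [Finset.mem_filter, Finset.mem_range]
    exact and_iff_right_of_imp lt_length_of_getD_eq_true
  rw [Nat.subtype_card _ h]
  clear h
  rw [Finset.card_filter]
  induction w with
  | nil => simp
  | cons x w ih =>
    rw [List.length_cons, Finset.sum_range_succ', List.count_cons]
    simp only [List.getD_cons_succ, ih, List.getD_cons_zero, beq_iff_eq]

theorem finite_getD_eq_true (w : List Bool) : Finite {p : ℕ // w.getD p false = true} :=
  (Set.finite_lt_nat w.length).subset fun _ ↦ lt_length_of_getD_eq_true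

/-- Pairs with prescribed total size, split according to the sizes of the two components. -/
noncomputable def sigmaAntidiagonalEquiv {α β : Type*} (p : α → Prop) (q : β → Prop)
    (f : α → ℕ) (g : β → ℕ) (N : ℕ) :
    (Σ ij : Finset.HasAntidiagonal.antidiagonal N,
      {a // p a ∧ f a = ij.1.1} × {b // q b ∧ g b = ij.1.2}) ≃
      {x : α × β // p x.1 ∧ q x.2 ∧ f x.1 + g x.2 = N} :=
  Equiv.ofBijective
    (fun x ↦ ⟨(x.2.1.1, x.2.2.1), x.2.1.2.1, x.2.2.2.1, by
      rw [x.2.1.2.2, x.2.2.2.2]; exact Finset.HasAntidiagonal.mem_antidiagonal.1 x.1.2⟩) (by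
    constructor
    · rintro ⟨⟨⟨i, j⟩, h⟩, ⟨a, ha, hi⟩, ⟨b, hb, hj⟩⟩
        ⟨⟨⟨i', j'⟩, h'⟩, ⟨a', ha', hi'⟩, ⟨b', hb', hj'⟩⟩ e
      simp only [Subtype.mk.injEq, Prod.mk.injEq] at e
      obtain ⟨rfl, rfl⟩ := e
      obtain rfl : f a = i := hi
      obtain rfl : g b = j := hj
      obtain rfl : f a = i' := hi'
      obtain rfl : g b = j' := hj'
      rfl
    · rintro ⟨⟨a, b⟩, ha, hb, h⟩
      exact ⟨⟨⟨(f a, g b), Finset.HasAntidiagonal.mem_antidiagonal.2 h⟩,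
        ⟨a, ha, rfl⟩, ⟨b, hb, rfl⟩⟩, rfl⟩)

/-- `(P₀, P₁, …, P_k)` is a sequence of Dyck words with `P₀` marked at one of its up steps. -/
def IsMarkedDyckSeq {k : ℕ} (s : (List Bool × ℕ) × (Fin k → List Bool)) : Prop :=
  IsDyckPath s.1.1 ∧ s.1.1.getD s.1.2 false = true ∧ ∀ j, IsDyckPath (s.2 j)

/-- The total size of a sequence of Dyck words. -/
def markedDyckSeqSize {k : ℕ} (s : (List Bool × ℕ) × (Fin k → List Bool)) : ℕ :=
  s.1.1.count true + ∑ j, (s.2 j).count true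

/-- A sequence consisting of `P₀` only is a Dyck word together with a marked up step. -/
def markedDyckSeqZeroEquiv (N : ℕ) :
    {s : (List Bool × ℕ) × (Fin 0 → List Bool) //
      IsMarkedDyckSeq s ∧ markedDyckSeqSize s = N} ≃
    Σ w : {w : List Bool // IsDyckPath w ∧ w.count true = N},
      {p : ℕ // w.1.getD p false = true} where
  toFun s := ⟨⟨s.1.1.1, s.2.1.1, by simpa [markedDyckSeqSize] using s.2.2⟩,
    ⟨s.1.1.2, s.2.1.2.1⟩⟩
  invFun x := ⟨((x.1.1, x.2.1), Fin.elim0), ⟨x.1.2.1, x.2.2, fun j ↦ j.elim0⟩,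
    by simpa [markedDyckSeqSize] using x.1.2.2⟩
  left_inv s := Subtype.ext (Prod.ext rfl (Subsingleton.elim _ _))
  right_inv _ := rfl

/-- Splitting off the first unmarked Dyck word of a sequence. -/
def markedDyckSeqSuccEquiv (k N : ℕ) :
    {s : (List Bool × ℕ) × (Fin (k + 1) → List Bool) //
      IsMarkedDyckSeq s ∧ markedDyckSeqSize s = N} ≃
    {x : ((List Bool × ℕ) × (Fin k → List Bool)) × List Bool //
      IsMarkedDyckSeq x.1 ∧ IsDyckPath x.2 ∧ markedDyckSeqSize x.1 + x.2.count true = N} where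
  toFun s := ⟨((s.1.1, Fin.tail s.1.2), s.1.2 0),
    ⟨s.2.1.1, s.2.1.2.1, fun j ↦ s.2.1.2.2 j.succ⟩, s.2.1.2.2 0, by
      have := s.2.2
      simp only [markedDyckSeqSize, Fin.sum_univ_succ] at this
      simp only [markedDyckSeqSize, Fin.tail]
      omega⟩
  invFun x := ⟨(x.1.1.1, Fin.cons x.1.2 x.1.1.2),
    ⟨x.2.1.1, x.2.1.2.1, Fin.cases x.2.2.1 x.2.1.2.2⟩, by
      have := x.2.2.2
      simp only [markedDyckSeqSize] at this
      simp only [markedDyckSeqSize, Fin.sum_univ_succ, Fin.cons_zero, Fin.cons_succ]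
      omega⟩
  left_inv s := by simp
  right_inv x := by simp

theorem finite_markedDyckSeq (k N : ℕ) :
    Finite {s : (List Bool × ℕ) × (Fin k → List Bool) //
      IsMarkedDyckSeq s ∧ markedDyckSeqSize s = N} := by
  induction k generalizing N with
  | zero =>
    have := finite_isDyckPath_count
    have := finite_getD_eq_true
    exact Finite.of_equiv _ (markedDyckSeqZeroEquiv N).symm
  | succ k ih =>
    have := finite_isDyckPath_count
    exact Finite.of_equiv _ ((sigmaAntidiagonalEquiv _ _ _ _ _).trans
      (markedDyckSeqSuccEquiv k N).symm)

open PowerSeries in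
theorem card_markedDyckSeq_eq_coeff (k N : ℕ) :
    Nat.card {s : (List Bool × ℕ) × (Fin k → List Bool) //
      IsMarkedDyckSeq s ∧ markedDyckSeqSize s = N} =
    coeff N ((PowerSeries.mk fun m ↦ m * catalan m) * catalanSeries ^ k) := by
  have hfin := finite_isDyckPath_count
  induction k generalizing N with
  | zero =>
    have := finite_getD_eq_true
    have := Fintype.ofFinite {w : List Bool // IsDyckPath w ∧ w.count true = N}
    rw [Nat.card_congr (markedDyckSeqZeroEquiv N), Nat.card_sigma]
    simp only [card_getD_eq_true, pow_zero, mul_one, coeff_mk]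
    rw [Finset.sum_congr rfl fun w _ ↦ w.2.2, Finset.sum_const, Finset.card_univ,
      ← Nat.card_eq_fintype_card, card_isDyckPath_count, smul_eq_mul, mul_comm]
  | succ k ih =>
    have := finite_markedDyckSeq k
    rw [Nat.card_congr (markedDyckSeqSuccEquiv k N),
      ← Nat.card_congr (sigmaAntidiagonalEquiv _ _ _ _ _), Nat.card_sigma, pow_succ,
      ← mul_assoc, coeff_mul]
    simp only [Nat.card_prod, ih, card_isDyckPath_count, catalanSeries_coeff]
    exact Finset.sum_coe_sort (Finset.HasAntidiagonal.antidiagonal N) fun x ↦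
      coeff x.1 ((PowerSeries.mk fun m ↦ m * catalan m) * catalanSeries ^ k) * catalan x.2

theorem mul_catalan_eq_choose (n : ℕ) : n * catalan n = (2 * n).choose (n + 1) := by
  have h₁ := succ_mul_catalan_eq_centralBinom n
  have h₂ := Nat.choose_succ_right_eq (2 * n) n
  rw [← Nat.centralBinom_eq_two_mul_choose, ← h₁] at h₂
  have h₃ : 2 * n - n = n := by omega
  rw [h₃] at h₂
  refine Nat.eq_of_mul_eq_mul_right n.succ_pos ?_
  rw [h₂, Nat.succ_eq_add_one]; ring

open PowerSeries in
theorem coeff_mul_catalanSeries_pow (k N : ℕ) :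
    coeff N ((PowerSeries.mk fun m ↦ m * catalan m) * catalanSeries ^ k) =
      (2 * N + k).choose (N + k + 1) := by
  induction N generalizing k with
  | zero =>
    rw [coeff_zero_eq_constantCoeff_apply, map_mul, ← coeff_zero_eq_constantCoeff_apply, coeff_mk,
      Nat.choose_eq_zero_of_lt (by omega)]
    simp
  | succ N ihN =>
    induction k with
    | zero => simp [mul_catalan_eq_choose]
    | succ k ihk =>
      have h : catalanSeries ^ (k + 1) = catalanSeries ^ k + catalanSeries ^ (k + 2) * X := by
        calc catalanSeries ^ (k + 1) = catalanSeries ^ k * (catalanSeries ^ 2 * X + 1) := by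
              rw [catalanSeries_sq_mul_X_add_one, pow_succ]
          _ = _ := by ring
      rw [h, mul_add, map_add, ihk, ← mul_assoc, coeff_succ_mul_X, ihN,
        show 2 * (N + 1) + (k + 1) = (2 * N + k + 2) + 1 by ring,
        Nat.choose_succ_succ' (2 * N + k + 2) (N + 1 + (k + 1))]
      ring_nf

theorem eq_take_append_true_cons_drop {w : List Bool} {p : ℕ} (hp : w.getD p false = true) :
    w = w.take p ++ true :: w.drop (p + 1) := by
  have hlt := lt_length_of_getD_eq_true hp
  rw [List.getD_eq_getElem _ _ hlt] at hp
  rw [← hp, List.getElem_cons_drop, List.take_append_drop]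

theorem count_true_append_upChain {k : ℕ} (A₀ B : List Bool) (D : Fin k → List Bool) :
    ((A₀ ++ upChain k D) ++ (List.replicate k false ++ true :: B)).count true =
      (A₀ ++ true :: B).count true + ∑ j, (D j).count true + k := by
  simp [count_true_upChain, List.count_replicate]
  omega

/-- Sequences of Dyck words with a marked up step in the first one correspond to Dyck words with
a marked factor `d^k u`: the chain of up steps matched with `d^k` is inserted before the mark. -/
noncomputable def markedDyckSeqEquiv (n k : ℕ) :
    {s : (List Bool × ℕ) × (Fin k → List Bool) //
      IsMarkedDyckSeq s ∧ markedDyckSeqSize s = n - k} ≃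
    {x : List Bool × List Bool //
      IsDyckWord n (x.1 ++ (List.replicate k false ++ true :: x.2))} :=
  Equiv.ofBijective
    (fun s ↦ ⟨(s.1.1.1.take s.1.1.2 ++ upChain k s.1.2, s.1.1.1.drop (s.1.1.2 + 1)), by
      obtain ⟨⟨⟨w, p⟩, D⟩, ⟨hw, hp, hD⟩, hs⟩ := s
      simp only [markedDyckSeqSize] at hw hp hD hs ⊢
      rw [eq_take_append_true_cons_drop hp] at hw hs
      refine isDyckWord_iff.2 ⟨(isDyckPath_append_upChain_iff hD _ _).2 hw, ?_⟩
      rw [count_true_append_upChain]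
      simp only [List.count_append, List.count_cons_self] at hs ⊢
      omega⟩) (by
    constructor
    · rintro ⟨⟨⟨w, p⟩, D⟩, ⟨hw, hp, hD⟩, hs⟩ ⟨⟨⟨w', p'⟩, D'⟩, ⟨hw', hp', hD'⟩, hs'⟩ e
      simp only [Subtype.mk.injEq, Prod.mk.injEq] at e hp hp' hD hD' ⊢
      obtain ⟨h₁, h₂⟩ := append_upChain_injective hD hD' e.1
      have hl := congrArg List.length h₁
      have hlt := lt_length_of_getD_eq_true hp
      have hlt' := lt_length_of_getD_eq_true hp'
      simp only [List.length_take] at hl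
      refine ⟨⟨?_, by omega⟩, h₂⟩
      rw [eq_take_append_true_cons_drop hp, eq_take_append_true_cons_drop hp', h₁, e.2]
    · rintro ⟨⟨A, B⟩, hx⟩
      obtain ⟨hx, hn⟩ := isDyckWord_iff.1 hx
      simp only at hx hn
      obtain ⟨A₀, D, rfl, hD⟩ := exists_eq_append_upChain k A (by
        have := hx.2 (A ++ List.replicate k false) (by simp)
        simpa [List.count_replicate] using this)
      rw [isDyckPath_append_upChain_iff hD] at hx
      rw [count_true_append_upChain] at hn
      refine ⟨⟨((A₀ ++ true :: B, A₀.length), D), ⟨hx, by simp, hD⟩, ?_⟩, ?_⟩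
      · simp only [markedDyckSeqSize]
        omega
      · simp)

section Excursion

variable {δ : ℕ → ℤ} {w : List Bool}

theorem elev_succ (p m : ℕ) :
    elev δ w p (p + (m + 1)) = elev δ w p (p + m) + stepVal δ w (p + m) :=
  Finset.sum_Ico_succ_top (Nat.le_add_right p m) _

theorem neg_one_le_stepVal (hδ : IsIncFun δ) (q : ℕ) : -1 ≤ stepVal δ w q := by
  unfold stepVal
  split
  · rcases hδ ((w.take (q + 1)).count true) with h | h <;> simp [h]
  · rfl

theorem stepVal_le_prefHeight_sub (hδ : IsIncFun δ) {q : ℕ} (hq : q < w.length) :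
    stepVal δ w q ≤ prefHeight w (q + 1) - prefHeight w q := by
  unfold stepVal prefHeight
  rw [List.getD_eq_getElem _ _ hq]
  split_ifs with h
  · have : δ ((w.take (q + 1)).count true) ≤ 1 := by
      rcases hδ ((w.take (q + 1)).count true) with h | h <;> simp [h]
    refine this.trans ?_
    rw [List.take_succ_eq_append_getElem hq, h]
    simp
  · rw [List.take_succ_eq_append_getElem hq, Bool.eq_false_of_not_eq_true h]
    simp

theorem elev_le_prefHeight_sub (hδ : IsIncFun δ) {p m : ℕ} (hm : p + m ≤ w.length) :
    elev δ w p (p + m) ≤ prefHeight w (p + m) - prefHeight w p := by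
  induction m with
  | zero => simp [elev]
  | succ m ih =>
    have h₁ := ih (by omega)
    have h₂ := stepVal_le_prefHeight_sub hδ (w := w) (q := p + m) (by omega)
    rw [elev_succ]
    rw [add_assoc] at h₂
    omega

theorem exists_isDeltaExcAt (hδ : IsIncFun δ) (hw : IsDyckPath w) {p : ℕ}
    (hp : w.getD p false = true) : ∃ C, IsDeltaExcAt δ w p C := by
  have hlt := lt_length_of_getD_eq_true hp
  have hend : elev δ w p (p + (w.length - p)) ≤ 0 := by
    refine (elev_le_prefHeight_sub hδ (by omega)).trans ?_
    have h₁ := hw.1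
    have h₂ := hw.2 (w.take p) (List.take_prefix _ _)
    rw [Nat.add_sub_cancel' hlt.le]
    simp only [prefHeight, List.take_length]
    omega
  have hex : ∃ m, 0 < m ∧ elev δ w p (p + m) ≤ 0 := ⟨w.length - p, by omega, hend⟩
  obtain ⟨hpos, hle⟩ := Nat.find_spec hex
  have hmin : ∀ m, 0 < m → m < Nat.find hex → 0 < elev δ w p (p + m) := fun m h₀ h ↦ by
    have := Nat.find_min hex h
    simpa [h₀] using this
  have hlen : Nat.find hex ≤ w.length - p := Nat.find_min' hex ⟨by omega, hend⟩
  have hge : 0 ≤ elev δ w p (p + Nat.find hex) := by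
    obtain ⟨m, hm⟩ : ∃ m, Nat.find hex = m + 1 := ⟨Nat.find hex - 1, by omega⟩
    rw [hm, elev_succ]
    rcases Nat.eq_zero_or_pos m with rfl | h₀
    · simp only [stepVal, elev, add_zero, hp, Finset.Ico_self, Finset.sum_empty, if_true, zero_add]
      rcases hδ ((w.take (p + 1)).count true) with h | h <;> simp [h]
    · have h₁ := hmin m h₀ (by omega)
      have h₂ := neg_one_le_stepVal (w := w) hδ (p + m)
      omega
  exact ⟨_, hp, _, hpos, by omega, rfl, le_antisymm hle hge, fun m h₀ h ↦ (hmin m h₀ h).ne'⟩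

theorem IsDeltaExcAt.unique {p : ℕ} {C C' : List Bool} (h : IsDeltaExcAt δ w p C)
    (h' : IsDeltaExcAt δ w p C') : C = C' := by
  obtain ⟨-, m, hm, -, rfl, h₀, hmin⟩ := h
  obtain ⟨-, m', hm', -, rfl, h₀', hmin'⟩ := h'
  rcases lt_trichotomy m m' with hlt | rfl | hlt
  · exact (hmin' m hm hlt h₀).elim
  · rfl
  · exact (hmin m' hm' hlt h₀').elim

end Excursion

/-- A Dyck word `A d^k u B` has a δ-excursion starting at that up step, and it is a prefix of
`u B`. -/
theorem exists_excursion_split {δ : ℕ → ℤ} (hδ : IsIncFun δ) {k : ℕ} {A B : List Bool}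
    (hw : IsDyckPath (A ++ (List.replicate k false ++ true :: B))) :
    ∃ C B', true :: B = C ++ B' ∧
      IsDeltaExcAt δ (A ++ (List.replicate k false ++ true :: B)) (A.length + k) C := by
  obtain ⟨C, hC⟩ := exists_isDeltaExcAt (p := A.length + k) hδ hw (by simp)
  obtain ⟨-, m, -, -, hCm, -⟩ := id hC
  refine ⟨C, (true :: B).drop m, ?_, hC⟩
  rw [hCm, ← List.append_assoc, List.drop_left' (by simp), List.take_append_drop]

theorem IsDeltaExcAt.exists_eq_true_cons {δ : ℕ → ℤ} {k : ℕ} {A C B : List Bool}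
    (h : IsDeltaExcAt δ (A ++ (List.replicate k false ++ (C ++ B))) (A.length + k) C) :
    ∃ C', C = true :: C' := by
  obtain ⟨h₁, m, hm, hle, hC, -⟩ := h
  cases C with
  | nil =>
    have := congrArg List.length hC
    simp at this hle
    omega
  | cons x C =>
    refine ⟨C, ?_⟩
    simp at h₁
    rw [h₁]

theorem isDyckPath_rotate {k : ℕ} {A C B : List Bool}
    (h : IsDyckPath (A ++ (List.replicate k false ++ (C ++ B)))) :
    IsDyckPath (A ++ (C ++ (List.replicate k false ++ B))) := by
  rw [isDyckPath_iff_walkHeight, walkHeight_append, Option.bind_eq_some_iff] at h ⊢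
  obtain ⟨a, ha, h⟩ := h
  rw [walkHeight_append, Option.bind_eq_some_iff] at h
  obtain ⟨b, hb, h⟩ := h
  rw [walkHeight_append, Option.bind_eq_some_iff] at h
  obtain ⟨c, hc, h⟩ := h
  obtain rfl : a = b + k := by
    have := (walkHeight_eq_some_iff.1 hb).1
    simp [List.count_replicate] at this
    omega
  exact ⟨_, ha, by
    simp [walkHeight_append, walkHeight_add k hc, walkHeight_replicate_false, h]⟩

theorem length_le_of_rotation_eq {k : ℕ} (hk : 0 < k) {A A' R R' S S' : List Bool}
    (hP : A ++ (List.replicate k false ++ R) = A' ++ (List.replicate k false ++ R'))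
    (hQ : A ++ true :: S = A' ++ S') : A'.length ≤ A.length := by
  by_contra hlt
  have h₁ := congrArg (fun l : List Bool ↦ l[A.length]?) hP
  have h₂ := congrArg (fun l : List Bool ↦ l[A.length]?) hQ
  simp [List.getElem?_append, hk, not_le.1 hlt] at h₁ h₂
  exact Bool.false_ne_true (h₁.symm.trans h₂)

/-- `(P, Q)` is a left interval of height `k` in `Tam^δ_n`. -/
def IsLeftInterval (n k : ℕ) (δ : ℕ → ℤ) (pq : List Bool × List Bool) : Prop :=
  IsDyckWord n pq.1 ∧ IsDyckWord n pq.2 ∧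
    ∃ A C B : List Bool,
      pq.1 = A ++ (List.replicate k false ++ (C ++ B)) ∧
      pq.2 = A ++ (C ++ (List.replicate k false ++ B)) ∧
      IsDeltaExcAt δ pq.1 (A.length + k) C

/-- A left interval of height `k` is determined by the factor `d^k u` of its lower bound at which
the rotation takes place. -/
theorem nonempty_equiv_isLeftInterval (n : ℕ) {k : ℕ} (hk : 0 < k) {δ : ℕ → ℤ}
    (hδ : IsIncFun δ) :
    Nonempty ({x : List Bool × List Bool //
      IsDyckWord n (x.1 ++ (List.replicate k false ++ true :: x.2))} ≃
    {pq // IsLeftInterval n k δ pq}) := by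
  choose C B hsplit hexc using
    fun x : {x : List Bool × List Bool //
        IsDyckWord n (x.1 ++ (List.replicate k false ++ true :: x.2))} ↦
      exists_excursion_split hδ (isDyckWord_iff.1 x.2).1
  have hmem : ∀ x, IsLeftInterval n k δ
      (x.1.1 ++ (List.replicate k false ++ true :: x.1.2),
        x.1.1 ++ (C x ++ (List.replicate k false ++ B x))) := by
    intro x
    refine ⟨x.2, ?_, x.1.1, C x, B x, by rw [hsplit], rfl, hexc x⟩
    have h := isDyckWord_iff.1 x.2
    rw [hsplit x] at h
    refine isDyckWord_iff.2 ⟨isDyckPath_rotate h.1, ?_⟩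
    have hcount := h.2
    simp only [List.count_append] at hcount ⊢
    omega
  have hhead : ∀ x, ∃ C', C x = true :: C' := fun x ↦ by
    have h := hexc x
    rw [hsplit] at h
    exact h.exists_eq_true_cons
  refine ⟨Equiv.ofBijective (fun x ↦ ⟨_, hmem x⟩) ⟨fun x y e ↦ ?_, ?_⟩⟩
  · simp only [Subtype.mk.injEq, Prod.mk.injEq] at e
    obtain ⟨hP, hQ⟩ := e
    obtain ⟨Cx, hCx⟩ := hhead x
    obtain ⟨Cy, hCy⟩ := hhead y
    rw [hCx, hCy] at hQ
    have hlen := le_antisymm (length_le_of_rotation_eq hk hP.symm hQ.symm)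
      (length_le_of_rotation_eq hk hP hQ)
    obtain ⟨h₁, h₂⟩ := List.append_inj hP hlen
    have h₃ := List.append_cancel_left h₂
    exact Subtype.ext (Prod.ext h₁ (List.cons.inj h₃).2)
  · rintro ⟨⟨P, Q⟩, hP, hQ, A, C', B', h₁, h₂, h₃⟩
    dsimp only at hP hQ h₁ h₂ h₃
    subst h₁ h₂
    obtain ⟨E, rfl⟩ := h₃.exists_eq_true_cons
    let x : {x : List Bool × List Bool //
        IsDyckWord n (x.1 ++ (List.replicate k false ++ true :: x.2))} := ⟨(A, E ++ B'), hP⟩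
    have hC : C x = true :: E := (hexc x).unique h₃
    have hB : B x = B' := by
      have h : true :: E ++ B' = C x ++ B x := hsplit x
      rw [hC] at h
      exact (List.append_cancel_left h).symm
    refine ⟨x, Subtype.ext (Prod.ext rfl ?_)⟩
    simp only [hC, hB]
    rfl

theorem nonempty_isLeftInterval_equiv_markedDyckSeq (n : ℕ) {k : ℕ} (hk : 0 < k) {δ : ℕ → ℤ}
    (hδ : IsIncFun δ) :
    Nonempty ({pq // IsLeftInterval n k δ pq} ≃
      {s : (List Bool × ℕ) × (Fin k → List Bool) //
        IsMarkedDyckSeq s ∧ markedDyckSeqSize s = n - k}) :=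
  (nonempty_equiv_isLeftInterval n hk hδ).map fun e ↦
    e.symm.trans (markedDyckSeqEquiv n k).symm

theorem ncard_isLeftInterval (n : ℕ) {k : ℕ} (hk : 0 < k) {δ : ℕ → ℤ} (hδ : IsIncFun δ) :
    {pq | IsLeftInterval n k δ pq}.ncard = (2 * n - k).choose (n + 1) := by
  obtain ⟨e⟩ := nonempty_isLeftInterval_equiv_markedDyckSeq n hk hδ
  refine (Nat.card_congr e).trans ?_
  rw [card_markedDyckSeq_eq_coeff, coeff_mul_catalanSeries_pow]
  rcases le_or_gt k n with hkn | hkn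
  · congr 1 <;> omega
  · rw [Nat.choose_eq_zero_of_lt (by omega), Nat.choose_eq_zero_of_lt (by omega)]

/-- left intervals of height `k ≥ 2` in `Tam^δ_n` are in bijection with
sequences `(P₀, P₁, …, P_k)` of Dyck words, `P₀` marked at one of its up steps, whose
sizes add up to `n - k`; in particular there are `binom (2n-k) (n+1)` of them. -/
theorem stmt18 (n k : ℕ) (hn : 1 ≤ n) (hk : 2 ≤ k) (δ : ℕ → ℤ) (hδ : IsIncFun δ) :
    Nonempty (
      {pq : List Bool × List Bool // IsDyckWord n pq.1 ∧ IsDyckWord n pq.2 ∧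
        ∃ A C B : List Bool,
          pq.1 = A ++ (List.replicate k false ++ (C ++ B)) ∧
          pq.2 = A ++ (C ++ (List.replicate k false ++ B)) ∧
          IsDeltaExcAt δ pq.1 (A.length + k) C} ≃
      {s : (List Bool × ℕ) × (Fin k → List Bool) //
        IsDyckPath s.1.1 ∧ s.1.1.getD s.1.2 false = true ∧
        (∀ j, IsDyckPath (s.2 j)) ∧
        s.1.1.count true + ∑ j, (s.2 j).count true = n - k}) ∧
    {pq : List Bool × List Bool | IsDyckWord n pq.1 ∧ IsDyckWord n pq.2 ∧
        ∃ A C B : List Bool,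
          pq.1 = A ++ (List.replicate k false ++ (C ++ B)) ∧
          pq.2 = A ++ (C ++ (List.replicate k false ++ B)) ∧
          IsDeltaExcAt δ pq.1 (A.length + k) C}.ncard
      = (2 * n - k).choose (n + 1) := by
  refine ⟨(nonempty_isLeftInterval_equiv_markedDyckSeq n (by omega) hδ).map fun e ↦
    e.trans (Equiv.subtypeEquivRight fun s ↦ ?_), ncard_isLeftInterval n (by omega) hδ⟩
  simp only [IsMarkedDyckSeq, markedDyckSeqSize, and_assoc]
end
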